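/- Let k ∈ ℕ with k ≥ 2 and let u(y) = exp(i y^{2k}) for y ∈ ℝ. Then the Gabor wave front set of u equals the punctured frequency axis: WF(u) = {0} × (ℝ \ {0}) ⊆ ℝ² \ {0}. -/

import Mathlib

open MeasureTheory

namespace Stmt14

/-- Gaussian-window short-time Fourier transform of `u : ℝ → ℂ`:
`Vu(x,ξ) = ∫ u(y) e^{−iyξ} e^{−(y−x)²} dy`. -/
noncomputable def STFT (u : ℝ → ℂ) (x ξ : ℝ) : ℂ :=
  ∫ y : ℝ, u y * Complex.exp (-(Complex.I) * (y : ℂ) * (ξ : ℂ))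
    * Complex.exp (-(((y - x) ^ 2 : ℝ) : ℂ))

/-- An open cone in `ℝ² \ {0}`. -/
def IsOpenCone (Γ : Set (ℝ × ℝ)) : Prop :=
  IsOpen Γ ∧ (0 : ℝ × ℝ) ∉ Γ ∧ ∀ z ∈ Γ, ∀ r : ℝ, 0 < r → r • z ∈ Γ

/-- The Gabor wave front set of `u : ℝ → ℂ`: the set of `z₀ ∈ ℝ² \ {0}` such that there is
no open cone containing `z₀` on which `Vu` decays faster than any power. -/
def gaborWF (u : ℝ → ℂ) : Set (ℝ × ℝ) :=
  {z | z ≠ 0 ∧ ¬ ∃ Γ : Set (ℝ × ℝ), IsOpenCone Γ ∧ z ∈ Γ ∧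
    ∀ N : ℕ, ∃ M : ℝ, ∀ w ∈ Γ,
      (1 + w.1 ^ 2 + w.2 ^ 2) ^ ((N : ℝ) / 2) * ‖STFT u w.1 w.2‖ ≤ M}

/-!
Write `u y = exp (i yⁿ)` with `n ≥ 3` even. The integrand of `Vu(x, ξ)` is entire in `y`, so the
line of integration may be rotated to angle `π / (2n)`, where `exp (i yⁿ)` turns into `exp (-yⁿ)`.
This super-Gaussian damping beats every cross term `|ξ| |y| ≤ C |x| |y|` and leaves
`exp (-x² / 2)`: `Vu` decays rapidly in each cone `|ξ| < C |x|`, and the wave front set lies on the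
frequency axis. Conversely, if the wave front set were empty then, by compactness of the unit
sphere, `Vu` would decay rapidly in all of phase space, and Fourier inversion of `Vu(x, ·)` at `x`
would force `u` to decay, whereas `|u| = 1`. So the wave front set contains a point of the axis, and
it is invariant under positive dilations and, `u` being even, under reflection.
-/

open Filter Set Topology
open Complex (I)

section ContourRotation

variable {E : Type*} [NormedAddCommGroup E] [NormedSpace ℂ E]

lemma norm_sub_le_of_norm_deriv_le_on_arc {F f : ℂ → E} {θ C : ℝ} {a : ℂ} (hθ : 0 ≤ θ)
    (hF : ∀ t ∈ Icc 0 θ, HasDerivAt F (f (Complex.exp (t * I) * a)) (Complex.exp (t * I) * a))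
    (hC : ∀ t ∈ Icc 0 θ, ‖f (Complex.exp (t * I) * a)‖ ≤ C) :
    ‖F (Complex.exp (θ * I) * a) - F a‖ ≤ ‖a‖ * C * θ := by
  have hderiv (t : ℝ) (ht : t ∈ Icc 0 θ) : HasDerivAt (fun s : ℝ => F (Complex.exp (s * I) * a))
      ((Complex.exp (t * I) * I * a) • f (Complex.exp (t * I) * a)) t := by
    have hexp : HasDerivAt (fun s : ℝ => Complex.exp (s * I) * a)
        (Complex.exp (t * I) * I * a) t := by
      simpa using (((hasDerivAt_id t).ofReal_comp.mul_const I).cexp.mul_const a)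
    exact (hF t ht).scomp t hexp
  have hbound (t : ℝ) (ht : t ∈ Ico 0 θ) :
      ‖(Complex.exp (t * I) * I * a) • f (Complex.exp (t * I) * a)‖ ≤ ‖a‖ * C := by
    rw [norm_smul]
    simpa [Complex.norm_exp_ofReal_mul_I] using
      mul_le_mul_of_nonneg_left (hC t (Ico_subset_Icc_self ht)) (norm_nonneg a)
  simpa using norm_image_sub_le_of_norm_deriv_le_segment'
    (fun t ht => (hderiv t ht).hasDerivWithinAt) hbound θ ⟨hθ, le_rfl⟩

variable [CompleteSpace E] {f : ℂ → E}

lemma norm_intervalIntegral_rotate_sub_le (hf : Differentiable ℂ f) {θ a b A B : ℝ} (hθ : 0 ≤ θ)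
    (hA : ∀ t ∈ Icc 0 θ, ‖f (Complex.exp (t * I) * a)‖ ≤ A)
    (hB : ∀ t ∈ Icc 0 θ, ‖f (Complex.exp (t * I) * b)‖ ≤ B) :
    ‖(∫ y in a..b, Complex.exp (θ * I) • f (Complex.exp (θ * I) * y)) - ∫ y in a..b, f y‖
      ≤ (|a| * A + |b| * B) * θ := by
  obtain ⟨F, hF⟩ := hf.isExactOn_univ
  replace hF : ∀ z, HasDerivAt F (f z) z := fun z => hF z (mem_univ z)
  have hray (c : ℂ) : ∫ y in a..b, c • f (c * y) = F (c * b) - F (c * a) := by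
    refine intervalIntegral.integral_eq_sub_of_hasDerivAt (f := fun y : ℝ => F (c * y))
      (fun y _ => ?_) (Continuous.intervalIntegrable ?_ a b)
    · have hline : HasDerivAt (fun s : ℝ => c * (s : ℂ)) c y := by
        simpa using (hasDerivAt_id y).ofReal_comp.const_mul c
      exact (hF _).scomp y hline
    · have := hf.continuous
      fun_prop
  have hreal : ∫ y in a..b, f y = F b - F a := by simpa using hray 1
  rw [hray, hreal, sub_sub_sub_comm]
  calc _ ≤ ‖F (Complex.exp (θ * I) * b) - F b‖ + ‖F (Complex.exp (θ * I) * a) - F a‖ :=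
        norm_sub_le _ _
    _ ≤ ‖(b : ℂ)‖ * B * θ + ‖(a : ℂ)‖ * A * θ := add_le_add
        (norm_sub_le_of_norm_deriv_le_on_arc hθ (fun _ _ => hF _) hB)
        (norm_sub_le_of_norm_deriv_le_on_arc hθ (fun _ _ => hF _) hA)
    _ = (|a| * A + |b| * B) * θ := by
        rw [Complex.norm_real, Complex.norm_real, Real.norm_eq_abs, Real.norm_eq_abs]
        ring

theorem integral_rotate_eq (hf : Differentiable ℂ f) {θ : ℝ} (hθ : 0 ≤ θ) {g : ℝ → ℝ}
    (hfg : ∀ t ∈ Icc 0 θ, ∀ y : ℝ, ‖f (Complex.exp (t * I) * y)‖ ≤ g y) (hg : Integrable g)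
    (hg₀ : Tendsto (fun y => |y| * g y) (cocompact ℝ) (𝓝 0)) :
    ∫ y : ℝ, Complex.exp (θ * I) • f (Complex.exp (θ * I) * y) = ∫ y : ℝ, f y := by
  have hcont := hf.continuous
  have hint_rotated : Integrable fun y : ℝ =>
      Complex.exp (θ * I) • f (Complex.exp (θ * I) * y) := by
    refine hg.mono' (Continuous.aestronglyMeasurable (by fun_prop)) (.of_forall fun y => ?_)
    simpa [norm_smul, Complex.norm_exp_ofReal_mul_I] using hfg θ ⟨hθ, le_rfl⟩ y
  have hint : Integrable fun y : ℝ => f y := by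
    refine hg.mono' (Continuous.aestronglyMeasurable (by fun_prop)) (.of_forall fun y => ?_)
    simpa using hfg 0 ⟨le_rfl, hθ⟩ y
  have htendsto := (intervalIntegral_tendsto_integral hint_rotated tendsto_neg_atTop_atBot
    tendsto_id).sub (intervalIntegral_tendsto_integral hint tendsto_neg_atTop_atBot tendsto_id)
  have hg_top := hg₀.mono_left atTop_le_cocompact
  have hg_bot := (hg₀.mono_left atBot_le_cocompact).comp tendsto_neg_atTop_atBot
  refine sub_eq_zero.mp (tendsto_nhds_unique htendsto (squeeze_zero_norm (fun R => ?_)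
    (by simpa using (hg_bot.add hg_top).mul_const θ)))
  simpa using norm_intervalIntegral_rotate_sub_le hf hθ (fun t ht => hfg t ht (-R))
    (fun t ht => hfg t ht R)

end ContourRotation

section WaveFrontSet

/-- The short-time Fourier transform of `u` decays on `Γ` faster than any power of
`⟨w⟩ = (1 + |w|²) ^ (1 / 2)`; this is the condition on a cone in the definition of `gaborWF`. -/
def RapidSTFTDecayOn (u : ℝ → ℂ) (Γ : Set (ℝ × ℝ)) : Prop :=
  ∀ N : ℕ, ∃ M : ℝ, ∀ w ∈ Γ, (1 + w.1 ^ 2 + w.2 ^ 2) ^ ((N : ℝ) / 2) * ‖STFT u w.1 w.2‖ ≤ M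

variable {u : ℝ → ℂ} {Γ Δ : Set (ℝ × ℝ)} {z : ℝ × ℝ}

lemma mem_gaborWF_iff :
    z ∈ gaborWF u ↔ z ≠ 0 ∧ ¬∃ Γ, IsOpenCone Γ ∧ z ∈ Γ ∧ RapidSTFTDecayOn u Γ :=
  Iff.rfl

lemma RapidSTFTDecayOn.mono (h : RapidSTFTDecayOn u Γ) (hΔ : Δ ⊆ Γ) : RapidSTFTDecayOn u Δ :=
  fun N => (h N).imp fun _ hM w hw => hM w (hΔ hw)

lemma RapidSTFTDecayOn.union (hΓ : RapidSTFTDecayOn u Γ) (hΔ : RapidSTFTDecayOn u Δ) :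
    RapidSTFTDecayOn u (Γ ∪ Δ) := by
  intro N
  obtain ⟨M₁, hM₁⟩ := hΓ N
  obtain ⟨M₂, hM₂⟩ := hΔ N
  exact ⟨max M₁ M₂, fun w hw => hw.elim (fun h => (hM₁ w h).trans (le_max_left _ _))
    (fun h => (hM₂ w h).trans (le_max_right _ _))⟩

lemma rapidSTFTDecayOn_empty : RapidSTFTDecayOn u ∅ :=
  fun _ => ⟨0, fun _ hw => hw.elim⟩

lemma rapidSTFTDecayOn_singleton : RapidSTFTDecayOn u {z} := by
  intro N
  exact ⟨_, fun w hw => by rw [mem_singleton_iff.mp hw]⟩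

lemma one_add_rpow_mul_exp_neg_le (N : ℕ) {a s : ℝ} (ha : 0 < a) (hs : 0 ≤ s) :
    (1 + s) ^ ((N : ℝ) / 2) * Real.exp (-a * s) ≤ N.factorial / a ^ N * Real.exp a := by
  have hpow : (1 + s) ^ ((N : ℝ) / 2) ≤ (1 + s) ^ N := by
    rw [← Real.rpow_natCast]
    exact Real.rpow_le_rpow_of_exponent_le (by linarith) (half_le_self N.cast_nonneg)
  have hexp : (1 + s) ^ N ≤ N.factorial / a ^ N * Real.exp (a * (1 + s)) := by
    have := Real.pow_div_factorial_le_exp (a * (1 + s)) (by positivity) N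
    rw [div_le_iff₀ (by positivity), mul_pow] at this
    rw [div_mul_eq_mul_div, le_div_iff₀ (by positivity)]
    linarith
  calc _ ≤ N.factorial / a ^ N * Real.exp (a * (1 + s)) * Real.exp (-a * s) := by
        gcongr
        exact hpow.trans hexp
    _ = N.factorial / a ^ N * Real.exp a := by
        rw [mul_assoc, ← Real.exp_add]
        ring_nf

lemma rapidSTFTDecayOn_of_gaussian {A a : ℝ} (ha : 0 < a)
    (h : ∀ w ∈ Γ, ‖STFT u w.1 w.2‖ ≤ A * Real.exp (-a * (w.1 ^ 2 + w.2 ^ 2))) :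
    RapidSTFTDecayOn u Γ := by
  refine fun N => ⟨|A| * (N.factorial / a ^ N * Real.exp a), fun w hw => ?_⟩
  calc (1 + w.1 ^ 2 + w.2 ^ 2) ^ ((N : ℝ) / 2) * ‖STFT u w.1 w.2‖
    _ ≤ (1 + w.1 ^ 2 + w.2 ^ 2) ^ ((N : ℝ) / 2) *
          (|A| * Real.exp (-a * (w.1 ^ 2 + w.2 ^ 2))) := by
        gcongr
        exact (h w hw).trans (by gcongr; exact le_abs_self A)
    _ = |A| * ((1 + (w.1 ^ 2 + w.2 ^ 2)) ^ ((N : ℝ) / 2) *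
          Real.exp (-a * (w.1 ^ 2 + w.2 ^ 2))) := by
        rw [add_assoc, mul_left_comm]
    _ ≤ _ := mul_le_mul_of_nonneg_left
        (one_add_rpow_mul_exp_neg_le N ha (by positivity)) (abs_nonneg A)

lemma smul_mem_gaborWF (hz : z ∈ gaborWF u) {r : ℝ} (hr : 0 < r) : r • z ∈ gaborWF u := by
  refine mem_gaborWF_iff.mpr ⟨smul_ne_zero hr.ne' hz.1, ?_⟩
  rintro ⟨Γ, hΓ, hrz, hdecay⟩
  refine hz.2 ⟨Γ, hΓ, ?_, hdecay⟩
  simpa [smul_smul, hr.ne'] using hΓ.2.2 _ hrz r⁻¹ (inv_pos.mpr hr)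

lemma STFT_neg_neg (hu : Function.Even u) (x ξ : ℝ) : STFT u (-x) (-ξ) = STFT u x ξ := by
  unfold STFT
  rw [← integral_neg_eq_self]
  refine integral_congr_ae (.of_forall fun y => ?_)
  have hsq : (-y - -x) ^ 2 = (y - x) ^ 2 := by ring
  simp only [hu y, hsq, Complex.ofReal_neg, mul_neg, neg_mul, neg_neg]

lemma neg_mem_gaborWF (hu : Function.Even u) (hz : z ∈ gaborWF u) : -z ∈ gaborWF u := by
  refine mem_gaborWF_iff.mpr ⟨neg_ne_zero.mpr hz.1, ?_⟩
  rintro ⟨Γ, ⟨hopen, hzero, hcone⟩, hnz, hdecay⟩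
  refine hz.2 ⟨Neg.neg ⁻¹' Γ, ⟨hopen.preimage continuous_neg, by simpa, fun w hw r hr => ?_⟩,
    hnz, fun N => ?_⟩
  · simpa using hcone _ hw r hr
  · obtain ⟨M, hM⟩ := hdecay N
    exact ⟨M, fun w hw => by simpa [STFT_neg_neg hu] using hM _ hw⟩

lemma smul_mem_gaborWF_of_even (hu : Function.Even u) (hz : z ∈ gaborWF u) {r : ℝ} (hr : r ≠ 0) :
    r • z ∈ gaborWF u := by
  rcases hr.lt_or_gt with hneg | hpos
  · simpa using smul_mem_gaborWF (neg_mem_gaborWF hu hz) (neg_pos.mpr hneg)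
  · exact smul_mem_gaborWF hz hpos

lemma rapidSTFTDecayOn_univ_of_gaborWF_eq_empty (h : gaborWF u = ∅) :
    RapidSTFTDecayOn u univ := by
  have hsphere : RapidSTFTDecayOn u
      {w | ∃ r : ℝ, 0 < r ∧ r • w ∈ Metric.sphere (0 : ℝ × ℝ) 1} := by
    refine (isCompact_sphere (0 : ℝ × ℝ) 1).induction_on
      (p := fun s => RapidSTFTDecayOn u {w | ∃ r : ℝ, 0 < r ∧ r • w ∈ s}) ?_ ?_ ?_ ?_
    · simpa using rapidSTFTDecayOn_empty
    · exact fun s t hst ht => ht.mono fun w ⟨r, hr, hw⟩ => ⟨r, hr, hst hw⟩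
    · refine fun s t hs ht => (hs.union ht).mono ?_
      rintro w ⟨r, hr, hw | hw⟩
      exacts [.inl ⟨r, hr, hw⟩, .inr ⟨r, hr, hw⟩]
    · intro z hz
      have hz₀ : z ≠ 0 := ne_zero_of_mem_unit_sphere ⟨z, hz⟩
      obtain ⟨Γ, ⟨hopen, -, hcone⟩, hzΓ, hdecay⟩ :
          ∃ Γ, IsOpenCone Γ ∧ z ∈ Γ ∧ RapidSTFTDecayOn u Γ := by
        by_contra hΓ
        exact h.subset (mem_gaborWF_iff.mpr ⟨hz₀, hΓ⟩)
      refine ⟨Γ, mem_nhdsWithin_of_mem_nhds (hopen.mem_nhds hzΓ), hdecay.mono ?_⟩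
      rintro w ⟨r, hr, hw⟩
      simpa [smul_smul, hr.ne'] using hcone _ hw r⁻¹ (inv_pos.mpr hr)
  refine (hsphere.union (rapidSTFTDecayOn_singleton (z := 0))).mono fun w _ => ?_
  rcases eq_or_ne w 0 with hw | hw
  · exact .inr hw
  · exact .inl ⟨‖w‖⁻¹, by positivity, by simp [norm_smul, hw]⟩

end WaveFrontSet

section FourierInversion

open scoped FourierTransform

variable {u : ℝ → ℂ} {x : ℝ}

/-- The function `u` multiplied by the Gaussian window centred at `x`; its Fourier transform is
`STFT u x`, up to the normalization of the frequency. -/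
noncomputable def gaussianWindowed (u : ℝ → ℂ) (x y : ℝ) : ℂ :=
  u y * Complex.exp (-(((y - x) ^ 2 : ℝ) : ℂ))

lemma fourier_gaussianWindowed (u : ℝ → ℂ) (x w : ℝ) :
    𝓕 (gaussianWindowed u x) w = STFT u x (2 * Real.pi * w) := by
  rw [Real.fourier_real_eq_integral_exp_smul]
  refine integral_congr_ae (.of_forall fun y => ?_)
  simp only [gaussianWindowed, smul_eq_mul]
  rw [mul_left_comm, ← mul_assoc]
  congr 3
  push_cast
  ring

lemma norm_le_integral_of_norm_STFT_le (hu : ContinuousAt u x)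
    (hint : Integrable (gaussianWindowed u x)) {g : ℝ → ℝ} (hg : Integrable g)
    (hle : ∀ w, ‖STFT u x (2 * Real.pi * w)‖ ≤ g w) : ‖u x‖ ≤ ∫ w, g w := by
  have hle' (w : ℝ) : ‖𝓕 (gaussianWindowed u x) w‖ ≤ g w := by
    rw [fourier_gaussianWindowed]
    exact hle w
  have hcont : Continuous (𝓕 (gaussianWindowed u x)) :=
    VectorFourier.fourierIntegral_continuous Real.continuous_fourierChar
      (innerSL ℝ).continuous₂ hint
  have hinv : 𝓕⁻ (𝓕 (gaussianWindowed u x)) x = u x := by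
    rw [hint.fourierInv_fourier_eq (hg.mono' hcont.aestronglyMeasurable (.of_forall hle'))
      (hu.mul (by fun_prop))]
    simp [gaussianWindowed]
  rw [← hinv, Real.fourierInv_eq']
  refine norm_integral_le_of_norm_le hg (.of_forall fun w => ?_)
  rw [norm_smul, Complex.norm_exp_ofReal_mul_I, one_mul]
  exact hle' w

-- The two extra powers of decay are spent on integrability in the frequency variable.
theorem rapid_decay_of_gaborWF_eq_empty (hu : Continuous u)
    (hint : ∀ x, Integrable (gaussianWindowed u x)) (h : gaborWF u = ∅) (N : ℕ) :
    ∃ M : ℝ, ∀ x, (1 + x ^ 2) ^ ((N : ℝ) / 2) * ‖u x‖ ≤ M := by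
  obtain ⟨M, hM⟩ := rapidSTFTDecayOn_univ_of_gaborWF_eq_empty h (N + 2)
  refine ⟨M * Real.pi, fun x => ?_⟩
  have hweight (w : ℝ) : (1 + x ^ 2) ^ ((N : ℝ) / 2) * (1 + w ^ 2) ≤
      (1 + x ^ 2 + (2 * Real.pi * w) ^ 2) ^ (((N + 2 : ℕ) : ℝ) / 2) := by
    have hexponent : ((N + 2 : ℕ) : ℝ) / 2 = (N : ℝ) / 2 + 1 := by
      push_cast
      ring
    have hw : w ^ 2 ≤ (2 * Real.pi * w) ^ 2 := by
      rw [mul_pow]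
      exact le_mul_of_one_le_left (sq_nonneg w) (one_le_pow₀ (by linarith [Real.pi_gt_three]))
    rw [hexponent, Real.rpow_add_one (by positivity)]
    gcongr ?_ ^ _ * ?_
    · exact le_add_of_nonneg_right (by positivity)
    · linarith [sq_nonneg x]
  have hle (w : ℝ) : ‖STFT u x (2 * Real.pi * w)‖ ≤
      M / (1 + x ^ 2) ^ ((N : ℝ) / 2) * (1 + w ^ 2)⁻¹ := by
    rw [← div_eq_mul_inv, div_div, le_div_iff₀ (by positivity), mul_comm]
    exact (mul_le_mul_of_nonneg_right (hweight w) (norm_nonneg _)).trans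
      (hM (x, 2 * Real.pi * w) (mem_univ _))
  have hux := norm_le_integral_of_norm_STFT_le hu.continuousAt (hint x)
    (integrable_inv_one_add_sq.const_mul _) hle
  rwa [integral_const_mul, integral_univ_inv_one_add_sq, div_mul_eq_mul_div,
    le_div_iff₀ (by positivity), mul_comm] at hux

end FourierInversion

section Chirp

/-- The chirp `exp (i yⁿ)`, a function of modulus one with instantaneous frequency `n yⁿ⁻¹`. -/
noncomputable def chirp (n : ℕ) (y : ℝ) : ℂ :=
  Complex.exp (I * (y : ℂ) ^ n)

lemma continuous_chirp (n : ℕ) : Continuous (chirp n) := by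
  unfold chirp
  fun_prop

lemma norm_chirp (n : ℕ) (y : ℝ) : ‖chirp n y‖ = 1 := by
  rw [chirp, ← Complex.ofReal_pow, mul_comm, Complex.norm_exp_ofReal_mul_I]

lemma even_chirp {n : ℕ} (hn : Even n) : Function.Even (chirp n) := by
  intro y
  simp only [chirp, Complex.ofReal_neg, hn.neg_pow]

lemma integrable_gaussianWindowed_chirp (n : ℕ) (x : ℝ) :
    Integrable (gaussianWindowed (chirp n) x) := by
  refine ((integrable_exp_neg_mul_sq one_pos).comp_sub_right x).mono' ?_ (.of_forall fun y => ?_)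
  · have := continuous_chirp n
    unfold gaussianWindowed
    exact Continuous.aestronglyMeasurable (by fun_prop)
  · rw [gaussianWindowed, norm_mul, norm_chirp, ← Complex.ofReal_neg, Complex.norm_exp_ofReal]
    simp

theorem gaborWF_chirp_nonempty (n : ℕ) : (gaborWF (chirp n)).Nonempty := by
  by_contra hempty
  obtain ⟨M, hM⟩ := rapid_decay_of_gaborWF_eq_empty (continuous_chirp n)
    (integrable_gaussianWindowed_chirp n) (not_nonempty_iff_eq_empty.mp hempty) 2
  have hM' (x : ℝ) : 1 + x ^ 2 ≤ M := by simpa [norm_chirp] using hM x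
  nlinarith [hM' M, sq_nonneg (M - 1)]

/-- The entire extension in `y` of the integrand of `STFT (chirp n) x ξ`. -/
noncomputable def chirpIntegrand (n : ℕ) (x ξ : ℝ) (z : ℂ) : ℂ :=
  Complex.exp (I * z ^ n - I * z * ξ - (z - x) ^ 2)

lemma differentiable_chirpIntegrand (n : ℕ) (x ξ : ℝ) :
    Differentiable ℂ (chirpIntegrand n x ξ) := by
  unfold chirpIntegrand
  fun_prop

lemma STFT_chirp (n : ℕ) (x ξ : ℝ) : STFT (chirp n) x ξ = ∫ y : ℝ, chirpIntegrand n x ξ y := by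
  refine integral_congr_ae (.of_forall fun y => ?_)
  simp only [chirp, chirpIntegrand]
  rw [← Complex.exp_add, ← Complex.exp_add]
  push_cast
  ring_nf

lemma norm_chirpIntegrand_rotate (n : ℕ) (x ξ θ y : ℝ) :
    ‖chirpIntegrand n x ξ (Complex.exp (θ * I) * y)‖ =
      Real.exp (-(y ^ n * Real.sin (n * θ)) + y * ξ * Real.sin θ - y ^ 2 * Real.cos (2 * θ)
        + 2 * x * y * Real.cos θ - x ^ 2) := by
  have hrotation : Complex.exp (θ * I) = Real.cos θ + Real.sin θ * I := by
    simp [Complex.exp_mul_I]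
  have hpow : (Complex.exp (θ * I) * y) ^ n =
      ((y ^ n * Real.cos (n * θ) : ℝ) : ℂ) + ((y ^ n * Real.sin (n * θ) : ℝ) : ℂ) * I := by
    rw [mul_pow, ← Complex.exp_nat_mul, ← mul_assoc, Complex.exp_mul_I]
    push_cast
    ring
  rw [chirpIntegrand, Complex.norm_exp, hpow, hrotation, Real.cos_two_mul']
  congr 1
  simp only [pow_two, Complex.sub_re, Complex.add_re, Complex.mul_re, Complex.I_re,
    Complex.I_im, Complex.ofReal_re, Complex.ofReal_im, Complex.sub_im, Complex.add_im,
    Complex.mul_im]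
  ring

lemma norm_chirpIntegrand_rotate_le {n : ℕ} (hn : 3 ≤ n) (x ξ y : ℝ) {θ : ℝ}
    (hθ : θ ∈ Icc 0 (Real.pi / (2 * n))) :
    ‖chirpIntegrand n x ξ (Complex.exp (θ * I) * y)‖ ≤
      Real.exp (-(y ^ n * Real.sin (n * θ)) - y ^ 2 / 2 + (|ξ| + 2 * |x|) * |y| - x ^ 2) := by
  have hcos : 1 / 2 ≤ Real.cos (2 * θ) := by
    have hθ' : θ ≤ Real.pi / (2 * 3) := hθ.2.trans (by gcongr; exact_mod_cast hn)
    rw [← Real.cos_pi_div_three]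
    apply Real.cos_le_cos_of_nonneg_of_le_pi <;> linarith [hθ.1, Real.pi_pos]
  have hgauss : y ^ 2 / 2 ≤ y ^ 2 * Real.cos (2 * θ) := by
    linarith [mul_le_mul_of_nonneg_left hcos (sq_nonneg y)]
  have hfreq : y * ξ * Real.sin θ ≤ |ξ| * |y| := by
    rw [← abs_mul, mul_comm ξ]
    exact (le_abs_self _).trans (by
      rw [abs_mul]; exact mul_le_of_le_one_right (abs_nonneg _) (Real.abs_sin_le_one θ))
  have htime : x * y * Real.cos θ ≤ |x| * |y| := by
    rw [← abs_mul]
    exact (le_abs_self _).trans (by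
      rw [abs_mul]; exact mul_le_of_le_one_right (abs_nonneg _) (Real.abs_cos_le_one θ))
  rw [norm_chirpIntegrand_rotate, Real.exp_le_exp]
  linarith

lemma norm_chirpIntegrand_rotate_le_gaussian {n : ℕ} (heven : Even n) (hn : 3 ≤ n)
    (x ξ y : ℝ) {θ : ℝ} (hθ : θ ∈ Icc 0 (Real.pi / (2 * n))) :
    ‖chirpIntegrand n x ξ (Complex.exp (θ * I) * y)‖ ≤
      Real.exp ((|ξ| + 2 * |x|) ^ 2) * Real.exp (-(1 / 4) * y ^ 2) := by
  have hsin : 0 ≤ Real.sin (n * θ) := by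
    have hn₀ : (0 : ℝ) < n := by exact_mod_cast (by lia : 0 < n)
    have hnθ : n * θ ≤ Real.pi / 2 := by
      calc n * θ ≤ n * (Real.pi / (2 * n)) := by gcongr; exact hθ.2
        _ = Real.pi / 2 := by field_simp
    exact Real.sin_nonneg_of_nonneg_of_le_pi (mul_nonneg hn₀.le hθ.1)
      (by linarith [Real.pi_pos])
  have hpow : 0 ≤ y ^ n * Real.sin (n * θ) := mul_nonneg (heven.pow_nonneg y) hsin
  have hlinear : (|ξ| + 2 * |x|) * |y| ≤ (|ξ| + 2 * |x|) ^ 2 + y ^ 2 / 4 := by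
    rw [← sq_abs y]
    linarith [sq_nonneg (|ξ| + 2 * |x| - |y| / 2)]
  rw [← Real.exp_add]
  exact (norm_chirpIntegrand_rotate_le hn x ξ y hθ).trans
    (Real.exp_le_exp.mpr (by linarith [sq_nonneg x]))

lemma STFT_chirp_eq_integral_rotate {n : ℕ} (heven : Even n) (hn : 3 ≤ n) (x ξ : ℝ) {θ : ℝ}
    (hθ : θ ∈ Icc 0 (Real.pi / (2 * n))) :
    STFT (chirp n) x ξ =
      ∫ y : ℝ, Complex.exp (θ * I) • chirpIntegrand n x ξ (Complex.exp (θ * I) * y) := by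
  rw [STFT_chirp]
  refine (integral_rotate_eq (differentiable_chirpIntegrand n x ξ) hθ.1
    (fun t ht y => norm_chirpIntegrand_rotate_le_gaussian heven hn x ξ y ⟨ht.1, ht.2.trans hθ.2⟩)
    ((integrable_exp_neg_mul_sq (by norm_num)).const_mul _) ?_).symm
  simpa [mul_left_comm] using (tendsto_rpow_abs_mul_exp_neg_mul_sq_cocompact
    (a := 1 / 4) (by norm_num) 1).const_mul (Real.exp ((|ξ| + 2 * |x|) ^ 2))

lemma mul_sq_le_pow_add_sq {n : ℕ} (heven : Even n) (hn : 3 ≤ n) {D : ℝ} (hD : 1 ≤ D) (y : ℝ) :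
    D * y ^ 2 ≤ y ^ n + D ^ 2 := by
  obtain ⟨m, rfl⟩ := heven.two_dvd
  rw [pow_mul]
  rcases le_total (y ^ 2) D with hy | hy
  · linarith [mul_le_mul_of_nonneg_left hy (zero_le_one.trans hD), pow_nonneg (sq_nonneg y) m]
  · calc D * y ^ 2 ≤ y ^ 2 * y ^ 2 := by gcongr
      _ = (y ^ 2) ^ 2 := (sq _).symm
      _ ≤ (y ^ 2) ^ m := pow_le_pow_right₀ (hD.trans hy) (by lia)
      _ ≤ (y ^ 2) ^ m + D ^ 2 := le_add_of_nonneg_right (sq_nonneg D)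

lemma norm_chirpIntegrand_rotate_le_of_cone {n : ℕ} (heven : Even n) (hn : 3 ≤ n) {C x ξ : ℝ}
    (hξ : |ξ| ≤ C * |x|) (y : ℝ) :
    ‖chirpIntegrand n x ξ (Complex.exp ((Real.pi / (2 * n) : ℝ) * I) * y)‖ ≤
      Real.exp (((C + 2) ^ 2 / 2 + 1) ^ 2) * Real.exp (-(x ^ 2 / 2)) *
        Real.exp (-1 * y ^ 2) := by
  set D := (C + 2) ^ 2 / 2 + 1 with hD
  have hn₀ : (n : ℝ) ≠ 0 := by exact_mod_cast (by lia : n ≠ 0)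
  have hsin : Real.sin (n * (Real.pi / (2 * n))) = 1 := by
    rw [← Real.sin_pi_div_two]
    congr 1
    field_simp
  have hcross : (|ξ| + 2 * |x|) * |y| ≤ x ^ 2 / 2 + (D - 1) * y ^ 2 := by
    calc (|ξ| + 2 * |x|) * |y| ≤ (C * |x| + 2 * |x|) * |y| := by gcongr
      _ ≤ |x| ^ 2 / 2 + (D - 1) * |y| ^ 2 := by
        rw [hD]
        linarith [sq_nonneg (|x| - (C + 2) * |y|)]
      _ = _ := by rw [sq_abs, sq_abs]
  have hpow := mul_sq_le_pow_add_sq heven hn (by rw [hD]; linarith [sq_nonneg (C + 2)] : 1 ≤ D) y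
  refine (norm_chirpIntegrand_rotate_le hn x ξ y ⟨by positivity, le_rfl⟩).trans ?_
  rw [hsin, ← Real.exp_add, ← Real.exp_add, Real.exp_le_exp]
  linarith [sq_nonneg y]

lemma norm_STFT_chirp_le {n : ℕ} (heven : Even n) (hn : 3 ≤ n) {C x ξ : ℝ}
    (hξ : |ξ| ≤ C * |x|) :
    ‖STFT (chirp n) x ξ‖ ≤
      Real.exp (((C + 2) ^ 2 / 2 + 1) ^ 2) * √Real.pi * Real.exp (-(x ^ 2 / 2)) := by
  rw [STFT_chirp_eq_integral_rotate heven hn x ξ ⟨by positivity, le_rfl⟩]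
  refine (norm_integral_le_of_norm_le ((integrable_exp_neg_mul_sq one_pos).const_mul _)
    (.of_forall fun y => ?_)).trans_eq (by
      rw [integral_const_mul, integral_gaussian, div_one, mul_right_comm])
  rw [norm_smul, Complex.norm_exp_ofReal_mul_I, one_mul]
  exact norm_chirpIntegrand_rotate_le_of_cone heven hn hξ y

lemma isOpenCone_setOf_abs_snd_lt (C : ℝ) : IsOpenCone {w : ℝ × ℝ | |w.2| < C * |w.1|} := by
  refine ⟨isOpen_lt (by fun_prop) (by fun_prop), by simp, fun w hw r hr => ?_⟩
  simpa [abs_mul, abs_of_pos hr, mul_left_comm C, hr] using hw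

lemma rapidSTFTDecayOn_chirp {n : ℕ} (heven : Even n) (hn : 3 ≤ n) (C : ℝ) :
    RapidSTFTDecayOn (chirp n) {w | |w.2| < C * |w.1|} := by
  refine rapidSTFTDecayOn_of_gaussian (A := Real.exp (((C + 2) ^ 2 / 2 + 1) ^ 2) * √Real.pi)
    (a := 1 / (2 * (1 + C ^ 2))) (by positivity)
    fun w hw => (norm_STFT_chirp_le heven hn (le_of_lt hw)).trans ?_
  have hsq : w.2 ^ 2 ≤ C ^ 2 * w.1 ^ 2 := by
    rw [← sq_abs w.2, ← sq_abs w.1, ← mul_pow]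
    exact pow_le_pow_left₀ (abs_nonneg _) (le_of_lt hw) 2
  gcongr
  rw [neg_mul, neg_le_neg_iff, one_div_mul_eq_div, div_le_div_iff₀ (by positivity) two_pos]
  linarith

theorem fst_eq_zero_of_mem_gaborWF_chirp {n : ℕ} (heven : Even n) (hn : 3 ≤ n) {z : ℝ × ℝ}
    (hz : z ∈ gaborWF (chirp n)) : z.1 = 0 := by
  by_contra hz₁
  have habs : 0 < |z.1| := abs_pos.mpr hz₁
  refine hz.2 ⟨_, isOpenCone_setOf_abs_snd_lt (|z.2| / |z.1| + 1), ?_,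
    rapidSTFTDecayOn_chirp heven hn _⟩
  change |z.2| < (|z.2| / |z.1| + 1) * |z.1|
  rw [add_mul, div_mul_cancel₀ _ habs.ne']
  linarith

end Chirp

/-- For `k ≥ 2`, the Gabor wave front set of `u(y) = exp(i y^{2k})` is
the punctured frequency axis `{0} × (ℝ \ {0})`. -/
theorem stmt_14 (k : ℕ) (hk : 2 ≤ k) :
    gaborWF (fun y : ℝ => Complex.exp (Complex.I * (y : ℂ) ^ (2 * k)))
      = {z : ℝ × ℝ | z.1 = 0 ∧ z.2 ≠ 0} := by
  change gaborWF (chirp (2 * k)) = _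
  have heven : Even (2 * k) := even_two_mul k
  have hvertical {z : ℝ × ℝ} (hz : z ∈ gaborWF (chirp (2 * k))) : z.1 = 0 ∧ z.2 ≠ 0 := by
    have hz₁ := fst_eq_zero_of_mem_gaborWF_chirp heven (by lia) hz
    exact ⟨hz₁, fun hz₂ => hz.1 (Prod.ext hz₁ hz₂)⟩
  refine Subset.antisymm (fun z hz => hvertical hz) ?_
  rintro z ⟨hz₁, hz₂⟩
  obtain ⟨w, hw⟩ := gaborWF_chirp_nonempty (2 * k)
  obtain ⟨hw₁, hw₂⟩ := hvertical hw
  have hzw : z = (z.2 / w.2) • w := by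
    ext
    · simp [hz₁, hw₁]
    · simp [hw₂]
  rw [hzw]
  exact smul_mem_gaborWF_of_even (even_chirp heven) hw (div_ne_zero hz₂ hw₂)

end Stmt14
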